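/- There is a constant C depending only on m and n such that Γ̃₀' ⊆ Γ'*(0,C); that is, if P is a polynomial of degree at most m−1 on ℝⁿ with |∂^β P(0)| ≤ 1 for |β| ≤ m−1 and P(x) + |x|^m ≥ 0 for all x ∈ ℝⁿ, then there exists F ∈ C^{m-1,1}(ℝⁿ) with ‖F‖_{C^{m-1,1}(ℝⁿ)} ≤ C, F ≥ 0 on ℝⁿ, and J₀(F) = P. -/

import Mathlib

open scoped BigOperators

noncomputable section

abbrev Euc (n : ℕ) : Type := EuclideanSpace ℝ (Fin n)
abbrev MPoly (n : ℕ) : Type := MvPolynomial (Fin n) ℝ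

/-- Partial derivative in the `i`-th coordinate direction. -/
noncomputable def pD {n : ℕ} (i : Fin n) (F : Euc n → ℝ) : Euc n → ℝ :=
  fun x => fderiv ℝ F x (EuclideanSpace.single i (1 : ℝ))

/-- The multi-index partial derivative `∂^α F`. -/
noncomputable def mD {n : ℕ} (α : Fin n → ℕ) (F : Euc n → ℝ) : Euc n → ℝ :=
  (((List.finRange n).flatMap fun i => List.replicate (α i) i)).foldr pD F

/-- Partial derivative within a set. -/
noncomputable def pDW {n : ℕ} (s : Set (Euc n)) (i : Fin n) (F : Euc n → ℝ) : Euc n → ℝ :=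
  fun x => fderivWithin ℝ F s x (EuclideanSpace.single i (1 : ℝ))

/-- Multi-index partial derivative within a set. -/
noncomputable def mDW {n : ℕ} (s : Set (Euc n)) (α : Fin n → ℕ) (F : Euc n → ℝ) : Euc n → ℝ :=
  (((List.finRange n).flatMap fun i => List.replicate (α i) i)).foldr (pDW s) F

/-- The order `|α|` of a multi-index. -/
def deg {n : ℕ} (α : Fin n → ℕ) : ℕ := ∑ i, α i

/-- Evaluation of an `n`-variable polynomial at a point of `ℝⁿ`. -/
noncomputable def peval {n : ℕ} (P : MPoly n) (x : Euc n) : ℝ :=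
  MvPolynomial.eval (fun i => x i) P

/-- `F ∈ C^m(ℝⁿ)` with `‖F‖_{C^m(ℝⁿ)} ≤ M`. -/
def CmNormLe (m n : ℕ) (F : Euc n → ℝ) (M : ℝ) : Prop :=
  ContDiff ℝ (m : ℕ∞) F ∧ ∀ α : Fin n → ℕ, deg α ≤ m → ∀ x : Euc n, |mD α F x| ≤ M

/-- `F ∈ C^{m-1,1}(ℝⁿ)` with `‖F‖_{C^{m-1,1}(ℝⁿ)} ≤ M`. -/
def CmLipNormLe (m n : ℕ) (F : Euc n → ℝ) (M : ℝ) : Prop :=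
  ContDiff ℝ ((m - 1 : ℕ) : ℕ∞) F ∧
  (∀ α : Fin n → ℕ, deg α ≤ m - 1 → ∀ x : Euc n, |mD α F x| ≤ M) ∧
  (∀ α : Fin n → ℕ, deg α = m - 1 → ∀ i : Fin n, ∀ x : Euc n, ∀ t : ℝ,
    |mD α F (x + t • EuclideanSpace.single i (1 : ℝ)) - mD α F x| ≤ M * |t|)

/-- `J_x(F) = P`, i.e. `P` is the `(m-1)`-st order Taylor polynomial of `F` at `x`. -/
def IsJetAt (m n : ℕ) (F : Euc n → ℝ) (x : Euc n) (P : MPoly n) : Prop :=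
  P.totalDegree ≤ m - 1 ∧
  ∀ α : Fin n → ℕ, deg α ≤ m - 1 → mD α (peval P) x = mD α F x

/-- `J_x^+(F) = P`, i.e. `P` is the `m`-th order Taylor polynomial of `F` at `x`. -/
def IsJetPlusAt (m n : ℕ) (F : Euc n → ℝ) (x : Euc n) (P : MPoly n) : Prop :=
  P.totalDegree ≤ m ∧
  ∀ α : Fin n → ℕ, deg α ≤ m → mD α (peval P) x = mD α F x

/-- Truncation of a polynomial: keep the monomials of total degree `≤ d`. -/
noncomputable def truncLE {n : ℕ} (d : ℕ) (P : MPoly n) : MPoly n :=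
  ∑ s ∈ P.support.filter (fun s => (s.sum fun _ e => e) ≤ d),
    MvPolynomial.monomial s (P.coeff s)

/-- Substitution `y ↦ y + v` in a polynomial. -/
noncomputable def polyShift {n : ℕ} (v : Fin n → ℝ) (P : MPoly n) : MPoly n :=
  MvPolynomial.aeval (fun i => (MvPolynomial.X i + MvPolynomial.C (v i) : MPoly n)) P

/-- The `(m-1)`-st order Taylor polynomial of a polynomial `P` at `x`. -/
noncomputable def jetTrunc (m n : ℕ) (x : Euc n) (P : MPoly n) : MPoly n :=
  polyShift (fun i => -(x i)) (truncLE (m - 1) (polyShift (fun i => x i) P))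

/-- Multiplication of `(m-1)`-jets at `x`: `P ⊙_x Q = J_x(PQ)`. -/
noncomputable def jmul (m n : ℕ) (x : Euc n) (P Q : MPoly n) : MPoly n :=
  jetTrunc m n x (P * Q)

/-- `Γ*(x,M)`. -/
def GammaStar (m n : ℕ) (x : Euc n) (M : ℝ) : Set (MPoly n) :=
  {P | ∃ F : Euc n → ℝ, CmNormLe m n F M ∧ (∀ y, 0 ≤ F y) ∧ IsJetAt m n F x P}

/-- `Γ_f(x,M)`. -/
def GammaF (m n : ℕ) (f : Euc n → ℝ) (x : Euc n) (M : ℝ) : Set (MPoly n) :=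
  {P ∈ GammaStar m n x M | peval P x = f x}

/-- `Γ'*(x,M)` (the `C^{m-1,1}` version). -/
def GammaStar' (m n : ℕ) (x : Euc n) (M : ℝ) : Set (MPoly n) :=
  {P | ∃ F : Euc n → ℝ, CmLipNormLe m n F M ∧ (∀ y, 0 ≤ F y) ∧ IsJetAt m n F x P}

/-- `Γ'_f(x,M)`. -/
def GammaF' (m n : ℕ) (f : Euc n → ℝ) (x : Euc n) (M : ℝ) : Set (MPoly n) :=
  {P ∈ GammaStar' m n x M | peval P x = f x}

/-- `Γ₀⁺`. -/
def Gamma0plus (m n : ℕ) : Set (MPoly n) :=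
  {P | P.totalDegree ≤ m ∧
    (∀ β : Fin n → ℕ, deg β ≤ m → |mD β (peval P) 0| ≤ 1) ∧
    (∀ x : Euc n, 0 ≤ peval P x + ‖x‖ ^ m) ∧
    (∀ ε : ℝ, 0 < ε → ∃ δ : ℝ, 0 < δ ∧ ∀ x : Euc n, ‖x‖ ≤ δ → 0 ≤ peval P x + ε * ‖x‖ ^ m)}

/-- `Γ̃₀'`. -/
def GammaTilde0' (m n : ℕ) : Set (MPoly n) :=
  {P | P.totalDegree ≤ m - 1 ∧
    (∀ β : Fin n → ℕ, deg β ≤ m - 1 → |mD β (peval P) 0| ≤ 1) ∧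
    ∀ x : Euc n, 0 ≤ peval P x + ‖x‖ ^ m}

/-- The closed axis-parallel cube with center `c` and sidelength `δ`. -/
def cube {n : ℕ} (c : Euc n) (δ : ℝ) : Set (Euc n) :=
  {y | ∀ i, |y i - c i| ≤ δ / 2}

/-- `F ∈ C^{m-1,1}(Q)` with `‖F‖_{C^{m-1,1}(Q)} ≤ M`, for the cube `Q` of center `c`,
sidelength `δ`. -/
def CmLipOnCubeLe (m n : ℕ) (c : Euc n) (δ : ℝ) (F : Euc n → ℝ) (M : ℝ) : Prop :=
  ContDiffOn ℝ ((m - 1 : ℕ) : ℕ∞) F (cube c δ) ∧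
  (∀ α : Fin n → ℕ, deg α ≤ m - 1 → ∀ x ∈ cube c δ, |mDW (cube c δ) α F x| ≤ M) ∧
  (∀ α : Fin n → ℕ, deg α = m - 1 → ∀ i : Fin n, ∀ x ∈ cube c δ, ∀ t : ℝ,
    x + t • EuclideanSpace.single i (1 : ℝ) ∈ cube c δ →
    |mDW (cube c δ) α F (x + t • EuclideanSpace.single i (1 : ℝ)) - mDW (cube c δ) α F x|
      ≤ M * |t|)

/-! The extension of `P` is `F = θ (P + ‖x‖ ^ m)`, with `θ` a smooth cutoff equal to `1` near the
origin; it is nonnegative by hypothesis. The function `‖x‖ ^ m` is positively homogeneous of degree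
`m` and smooth off the origin, so its `j`-th derivative is homogeneous of degree `m - j`: it
vanishes at the origin for `j < m`, which keeps the jet equal to `P`, and for `j = m - 1` it has
degree one and is therefore Lipschitz. The norm bound is uniform in `P` because the derivative
bounds at `0` place the coefficients of `P` in `[-1, 1]`, and there are finitely many monomials. -/

open Filter Function Topology
open scoped ContDiff NNReal

section Lipschitz

theorem exists_lipschitzWith_of_locallyLipschitz_of_hasCompactSupport {X F : Type*}
    [PseudoMetricSpace X] [ProperSpace X] [SeminormedAddCommGroup F] {f : X → F}
    (hf : LocallyLipschitz f) (hc : HasCompactSupport f) : ∃ K, LipschitzWith K f := by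
  obtain ⟨L, hL⟩ := (hf.locallyLipschitzOn
    (s := Metric.cthickening 1 (tsupport f))).exists_lipschitzOnWith_of_compact hc.cthickening
  obtain ⟨B, hB⟩ := hc.exists_bound_of_continuous hf.continuous
  have h_left : ∀ x ∈ tsupport f, ∀ y, dist (f x) (f y) ≤ max L B.toNNReal * dist x y := by
    intro x hx y
    by_cases hy : y ∈ Metric.cthickening 1 (tsupport f)
    · refine (hL.dist_le_mul x (Metric.self_subset_cthickening _ hx) y hy).trans ?_
      gcongr
      exact le_max_left _ _
    · have h_far : 1 ≤ dist x y := by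
        rw [dist_comm]
        exact le_of_not_ge fun h => hy (Metric.mem_cthickening_of_dist_le y x 1 _ hx h)
      have hfy : f y = 0 :=
        image_eq_zero_of_notMem_tsupport fun h => hy (Metric.self_subset_cthickening _ h)
      calc dist (f x) (f y) = ‖f x‖ := by rw [hfy, dist_zero_right]
        _ ≤ max L B.toNNReal * 1 := by
          rw [mul_one, NNReal.coe_max]
          exact (hB x).trans ((Real.le_coe_toNNReal B).trans (le_max_right _ _))
        _ ≤ max L B.toNNReal * dist x y := by gcongr
  refine ⟨max L B.toNNReal, .of_dist_le_mul fun x y => ?_⟩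
  by_cases hx : x ∈ tsupport f
  · exact h_left x hx y
  by_cases hy : y ∈ tsupport f
  · rw [dist_comm (f x), dist_comm x]
    exact h_left y hy x
  · rw [image_eq_zero_of_notMem_tsupport hx, image_eq_zero_of_notMem_tsupport hy, dist_self]
    positivity

variable {E F : Type*} [NormedAddCommGroup E] [NormedSpace ℝ E]
  [NormedAddCommGroup F] [NormedSpace ℝ F] {k : ℕ} {f g : E → F} {x : E}

/-- `f` is of class `C^{k,1}` in a neighbourhood of `x`: it is `C^k` there and its `k`-th derivative
is Lipschitz on a neighbourhood of `x`. -/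
def ContDiffLipschitzAt (k : ℕ) (f : E → F) (x : E) : Prop :=
  ContDiffAt ℝ k f x ∧ ∃ K, ∃ t ∈ 𝓝 x, LipschitzOnWith K (iteratedFDeriv ℝ k f) t

theorem contDiffLipschitzAt_of_contDiffAt_succ (hf : ContDiffAt ℝ (k + 1) f x) :
    ContDiffLipschitzAt k f x :=
  ⟨hf.of_le (by norm_cast; omega),
    (hf.iteratedFDeriv_right (add_comm _ _).le).exists_lipschitzOnWith⟩

theorem contDiffLipschitzAt_of_contDiffAt_infty (hf : ContDiffAt ℝ ∞ f x) :
    ContDiffLipschitzAt k f x :=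
  contDiffLipschitzAt_of_contDiffAt_succ (hf.of_le (mod_cast le_top))

theorem ContDiffLipschitzAt.congr_of_eventuallyEq (hf : ContDiffLipschitzAt k f x)
    (h : g =ᶠ[𝓝 x] f) : ContDiffLipschitzAt k g x := by
  obtain ⟨hcd, K, t, ht, hK⟩ := hf
  obtain ⟨s, hs, hst⟩ := (h.iteratedFDeriv ℝ k).exists_mem
  refine ⟨hcd.congr_of_eventuallyEq h, K, s ∩ t, inter_mem hs ht, fun y hy z hz => ?_⟩
  rw [hst hy.1, hst hz.1]
  exact hK hy.2 hz.2

end Lipschitz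

section Homogeneous

variable {E F G : Type*} [NormedAddCommGroup E] [NormedSpace ℝ E]
  [NormedAddCommGroup F] [NormedSpace ℝ F] [NormedAddCommGroup G] [NormedSpace ℝ G]
  {d j k : ℕ} {f : E → F}

theorem exists_norm_le_mul_norm_pow_of_map_smul [ProperSpace E] (hf : ContinuousOn f {0}ᶜ)
    (hsmul : ∀ ⦃t : ℝ⦄, 0 < t → ∀ x, f (t • x) = t ^ d • f x) :
    ∃ C : ℝ≥0, ∀ x ≠ 0, ‖f x‖ ≤ C * ‖x‖ ^ d := by
  obtain ⟨C, hC⟩ := (isCompact_sphere (0 : E) 1).exists_bound_of_continuousOn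
    (hf.mono fun x hx => ne_zero_of_mem_unit_sphere ⟨x, hx⟩)
  refine ⟨C.toNNReal, fun x hx => ?_⟩
  have hx' : 0 < ‖x‖ := norm_pos_iff.2 hx
  calc ‖f x‖ = ‖x‖ ^ d * ‖f (‖x‖⁻¹ • x)‖ := by
        rw [← norm_norm x, ← norm_pow, ← norm_smul, norm_norm, ← hsmul hx',
          smul_inv_smul₀ hx'.ne']
    _ ≤ ‖x‖ ^ d * C.toNNReal := by
        gcongr
        exact (hC _ (by simp [norm_smul, hx'.ne'])).trans (Real.le_coe_toNNReal C)
    _ = C.toNNReal * ‖x‖ ^ d := mul_comm _ _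

/-- `f` is positively homogeneous of degree `d`, and smooth away from the origin. -/
structure IsSmoothHomogeneous (d : ℕ) (f : E → F) : Prop where
  contDiffAt : ∀ ⦃x⦄, x ≠ 0 → ContDiffAt ℝ ∞ f x
  map_smul : ∀ ⦃t : ℝ⦄, 0 ≤ t → ∀ x, f (t • x) = t ^ d • f x

theorem isSmoothHomogeneous_norm_pow {V : Type*} [NormedAddCommGroup V] [InnerProductSpace ℝ V]
    (d : ℕ) : IsSmoothHomogeneous d fun x : V => ‖x‖ ^ d where
  contDiffAt _ hx := (contDiffAt_norm ℝ hx).pow d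
  map_smul t ht x := by rw [norm_smul, mul_pow, Real.norm_of_nonneg ht, smul_eq_mul]

namespace IsSmoothHomogeneous

theorem map_zero (hf : IsSmoothHomogeneous (d + 1) f) : f 0 = 0 := by
  simpa using hf.map_smul le_rfl 0

theorem continuousLinearMap_comp (L : F →L[ℝ] G) (hf : IsSmoothHomogeneous d f) :
    IsSmoothHomogeneous d (L ∘ f) where
  contDiffAt _ hx := L.contDiff.contDiffAt.comp _ (hf.contDiffAt hx)
  map_smul t ht x := by simp only [comp_apply, hf.map_smul ht, _root_.map_smul]

theorem fderiv_smul (hf : IsSmoothHomogeneous (d + 1) f) {t : ℝ} (ht : 0 < t) (x : E) :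
    fderiv ℝ f (t • x) = t ^ d • fderiv ℝ f x := by
  refine smul_right_injective _ ht.ne' ?_
  calc t • fderiv ℝ f (t • x) = fderiv ℝ (fun y => f (t • y)) x := (fderiv_comp_smul t).symm
    _ = fderiv ℝ (t ^ (d + 1) • f) x := by
        congr 1
        exact funext (hf.map_smul ht.le)
    _ = t • t ^ d • fderiv ℝ f x := by rw [fderiv_const_smul_field, pow_succ', mul_smul]; rfl

theorem continuousOn_fderiv (hf : IsSmoothHomogeneous d f) : ContinuousOn (fderiv ℝ f) {0}ᶜ :=
  fun _ hx => ((hf.contDiffAt hx).fderiv_right (m := 0) (by simp)).continuousAt.continuousWithinAt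

variable [ProperSpace E]

theorem exists_norm_le (hf : IsSmoothHomogeneous (d + 1) f) :
    ∃ C : ℝ≥0, ∀ x, ‖f x‖ ≤ C * ‖x‖ ^ (d + 1) := by
  obtain ⟨C, hC⟩ := exists_norm_le_mul_norm_pow_of_map_smul
    (fun x hx => (hf.contDiffAt hx).continuousAt.continuousWithinAt)
    fun t ht => hf.map_smul ht.le
  refine ⟨C, fun x => ?_⟩
  rcases eq_or_ne x 0 with rfl | hx
  · simp [hf.map_zero]
  · exact hC x hx

theorem isBigO_zero (hf : IsSmoothHomogeneous (d + 1) f) :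
    f =O[𝓝 0] fun x => ‖x - 0‖ ^ (d + 1) := by
  obtain ⟨C, hC⟩ := hf.exists_norm_le
  exact .of_bound C (.of_forall fun x => by simpa using hC x)

theorem continuous (hf : IsSmoothHomogeneous (d + 1) f) : Continuous f := by
  refine continuous_iff_continuousAt.2 fun x => ?_
  rcases eq_or_ne x 0 with rfl | hx
  · have h_pow : Tendsto (fun x : E => ‖x - 0‖ ^ (d + 1)) (𝓝 0) (𝓝 0) :=
      Continuous.tendsto' (by fun_prop) _ _ (by simp)
    rw [ContinuousAt, hf.map_zero]
    exact hf.isBigO_zero.trans_tendsto h_pow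
  · exact (hf.contDiffAt hx).continuousAt

theorem hasFDerivAt_zero (hf : IsSmoothHomogeneous (d + 2) f) :
    HasFDerivAt f (0 : E →L[ℝ] F) 0 :=
  hf.isBigO_zero.hasFDerivAt (by omega)

theorem differentiable (hf : IsSmoothHomogeneous (d + 2) f) : Differentiable ℝ f := fun x => by
  rcases eq_or_ne x 0 with rfl | hx
  · exact hf.hasFDerivAt_zero.differentiableAt
  · exact (hf.contDiffAt hx).differentiableAt (by simp)

theorem fderiv (hf : IsSmoothHomogeneous (d + 2) f) :
    IsSmoothHomogeneous (d + 1) (fderiv ℝ f) where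
  contDiffAt _ hx := (hf.contDiffAt hx).fderiv_right (by simp)
  map_smul t ht x := by
    rcases ht.eq_or_lt with rfl | ht
    · simp [hf.hasFDerivAt_zero.fderiv]
    · exact hf.fderiv_smul ht x

theorem iteratedFDeriv (hf : IsSmoothHomogeneous (d + 1 + j) f) :
    IsSmoothHomogeneous (d + 1) (iteratedFDeriv ℝ j f) := by
  induction j generalizing d with
  | zero =>
    rw [iteratedFDeriv_zero_eq_comp]
    exact hf.continuousLinearMap_comp
      (continuousMultilinearCurryFin0 ℝ E F).symm.toContinuousLinearEquiv.toContinuousLinearMap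
  | succ j ih =>
    rw [iteratedFDeriv_succ_eq_comp_left]
    rw [show d + 1 + (j + 1) = d + 1 + 1 + j by omega] at hf
    exact (ih hf).fderiv.continuousLinearMap_comp
      (continuousMultilinearCurryLeftEquiv ℝ
        (fun _ : Fin (j + 1) => E) F).symm.toContinuousLinearEquiv.toContinuousLinearMap

theorem iteratedFDeriv_zero (hf : IsSmoothHomogeneous d f) (hj : j < d) :
    _root_.iteratedFDeriv ℝ j f 0 = 0 := by
  obtain ⟨e, rfl⟩ := Nat.exists_eq_add_of_lt hj
  rw [add_assoc, add_comm] at hf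
  exact hf.iteratedFDeriv.map_zero

theorem contDiff (hf : IsSmoothHomogeneous d f) (hk : k < d) : ContDiff ℝ k f := by
  refine contDiff_nat_iff_continuous_differentiable.2 ⟨fun j hj => ?_, fun j hj => ?_⟩
  · obtain ⟨e, rfl⟩ := Nat.exists_eq_add_of_lt (hj.trans_lt hk)
    rw [show j + e + 1 = e + 1 + j by omega] at hf
    exact hf.iteratedFDeriv.continuous
  · obtain ⟨e, rfl⟩ := Nat.exists_eq_add_of_le (show j + 2 ≤ d by omega)
    rw [show j + 2 + e = e + 1 + 1 + j by omega] at hf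
    exact hf.iteratedFDeriv.differentiable

-- The derivative is bounded off the origin, so the mean value inequality applies to every segment
-- avoiding the origin; a segment through the origin is cut there.
theorem exists_lipschitzWith (hf : IsSmoothHomogeneous 1 f) : ∃ K, LipschitzWith K f := by
  obtain ⟨A, hA⟩ := hf.exists_norm_le (d := 0)
  obtain ⟨B, hB⟩ := exists_norm_le_mul_norm_pow_of_map_smul hf.continuousOn_fderiv
    fun t ht => hf.fderiv_smul (d := 0) ht
  simp only [zero_add, pow_one, pow_zero, mul_one] at hA hB
  refine ⟨max A B, LipschitzWith.of_dist_le_mul fun x y => ?_⟩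
  by_cases h0 : (0 : E) ∈ segment ℝ x y
  · calc dist (f x) (f y) ≤ ‖f x‖ + ‖f y‖ := dist_le_norm_add_norm _ _
      _ ≤ A * ‖x‖ + A * ‖y‖ := add_le_add (hA x) (hA y)
      _ = A * dist x y := by
          rw [← mul_add, ← dist_add_dist_of_mem_segment h0, dist_zero_right, dist_zero_left]
      _ ≤ max A B * dist x y := by gcongr; exact le_max_left _ _
  · have h_ne : ∀ z ∈ segment ℝ x y, z ≠ 0 := fun z hz h => h0 (h ▸ hz)
    have h_mvt : LipschitzOnWith B f (segment ℝ x y) :=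
      (convex_segment x y).lipschitzOnWith_of_nnnorm_fderiv_le
        (fun z hz => (hf.contDiffAt (h_ne z hz)).differentiableAt (by simp))
        fun z hz => hB z (h_ne z hz)
    refine (h_mvt.dist_le_mul x (left_mem_segment ℝ x y) y (right_mem_segment ℝ x y)).trans ?_
    gcongr
    exact le_max_right _ _

theorem contDiffLipschitzAt (hf : IsSmoothHomogeneous (k + 1) f) (x : E) :
    ContDiffLipschitzAt k f x := by
  have h_iter : IsSmoothHomogeneous 1 (_root_.iteratedFDeriv ℝ k f) :=
    IsSmoothHomogeneous.iteratedFDeriv (d := 0) (by rwa [zero_add, add_comm])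
  obtain ⟨K, hK⟩ := h_iter.exists_lipschitzWith
  exact ⟨(hf.contDiff k.lt_succ_self).contDiffAt, K, Set.univ, univ_mem, hK.lipschitzOnWith⟩

theorem contDiffLipschitzAt_smul (hf : IsSmoothHomogeneous (k + 1) f) {θ : E → ℝ}
    (hθ : ContDiff ℝ ∞ θ) (hθ_one : θ =ᶠ[𝓝 0] 1) (x : E) : ContDiffLipschitzAt k (θ • f) x := by
  rcases eq_or_ne x 0 with rfl | hx
  · refine (hf.contDiffLipschitzAt 0).congr_of_eventuallyEq ?_
    filter_upwards [hθ_one] with y hy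
    simp [hy]
  · exact contDiffLipschitzAt_of_contDiffAt_infty (hθ.contDiffAt.smul (hf.contDiffAt hx))

end IsSmoothHomogeneous

end Homogeneous

section MultiIndex

variable {n : ℕ}

/-- The coordinate directions along which `∂^α` differentiates, each `i` occurring `α i` times. -/
def directions (α : Fin n → ℕ) : List (Fin n) :=
  (List.finRange n).flatMap fun i => List.replicate (α i) i

theorem length_directions (α : Fin n → ℕ) : (directions α).length = deg α := by
  simp [directions, deg, List.length_flatMap, List.sum_ofFn, ← List.ofFn_eq_map]

theorem sum_map_single_directions (s : Fin n →₀ ℕ) :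
    ((directions s).map fun i => Finsupp.single i 1).sum = s := by
  have h_flatMap (L : List (Fin n)) :
      ((L.flatMap fun i => List.replicate (s i) i).map fun i => Finsupp.single i 1).sum =
        (L.map fun i => Finsupp.single i (s i)).sum := by
    induction L with
    | nil => rfl
    | cons i L ih => simp [ih]
  rw [directions, h_flatMap, ← List.ofFn_eq_map, List.sum_ofFn, Finsupp.univ_sum_single]

theorem exists_foldr_pD_eq_iteratedFDeriv (l : List (Fin n)) :
    ∃ v : Fin l.length → Euc n, (∀ j, ‖v j‖ = 1) ∧ ∀ f : Euc n → ℝ, ContDiff ℝ l.length f →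
      ∀ x, l.foldr pD f x = iteratedFDeriv ℝ l.length f x v := by
  induction l with
  | nil => exact ⟨![], fun j => j.elim0, fun _ _ _ => rfl⟩
  | cons i l ih =>
    obtain ⟨v, hv, hD⟩ := ih
    refine ⟨Fin.cons (EuclideanSpace.single i 1) v, Fin.cases (by simp) (by simpa using hv),
      fun f hf x => ?_⟩
    have h_diff : DifferentiableAt ℝ (iteratedFDeriv ℝ l.length f) x :=
      hf.differentiable_iteratedFDeriv (by norm_cast; simp) x
    have h_tail : l.foldr pD f = fun y => iteratedFDeriv ℝ l.length f y v :=
      funext (hD f (hf.of_le (by norm_cast; simp)))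
    rw [List.foldr_cons, h_tail]
    exact (h_diff.iteratedFDeriv_succ_apply_left'
      (m := Fin.cons (EuclideanSpace.single i 1) v)).symm

theorem exists_mD_eq_iteratedFDeriv (α : Fin n → ℕ) :
    ∃ v : Fin (deg α) → Euc n, (∀ j, ‖v j‖ = 1) ∧ ∀ f : Euc n → ℝ, ContDiff ℝ (deg α) f →
      ∀ x, mD α f x = iteratedFDeriv ℝ (deg α) f x v :=
  length_directions α ▸ exists_foldr_pD_eq_iteratedFDeriv (directions α)

variable {α : Fin n → ℕ} {f g : Euc n → ℝ}

theorem abs_mD_le (hf : ContDiff ℝ (deg α) f) (x : Euc n) :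
    |mD α f x| ≤ ‖iteratedFDeriv ℝ (deg α) f x‖ := by
  obtain ⟨v, hv, hD⟩ := exists_mD_eq_iteratedFDeriv α
  simpa only [hD f hf, hv, Finset.prod_const_one, mul_one, Real.norm_eq_abs] using
    (iteratedFDeriv ℝ (deg α) f x).le_opNorm v

theorem abs_mD_sub_mD_le (hf : ContDiff ℝ (deg α) f) (x y : Euc n) :
    |mD α f x - mD α f y| ≤ dist (iteratedFDeriv ℝ (deg α) f x) (iteratedFDeriv ℝ (deg α) f y) := by
  obtain ⟨v, hv, hD⟩ := exists_mD_eq_iteratedFDeriv α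
  simpa only [hD f hf, hv, Finset.prod_const_one, mul_one, dist_eq_norm, Real.norm_eq_abs,
    sub_apply] using
    (iteratedFDeriv ℝ (deg α) f x - iteratedFDeriv ℝ (deg α) f y).le_opNorm v

theorem mD_add (hf : ContDiff ℝ (deg α) f) (hg : ContDiff ℝ (deg α) g) :
    mD α (f + g) = mD α f + mD α g := by
  obtain ⟨v, -, hD⟩ := exists_mD_eq_iteratedFDeriv α
  ext x
  rw [Pi.add_apply, hD f hf, hD g hg, hD (f + g) (hf.add hg), iteratedFDeriv_add hf hg,
    Pi.add_apply, add_apply]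

theorem mD_const_smul (c : ℝ) (hf : ContDiff ℝ (deg α) f) : mD α (c • f) = c • mD α f := by
  obtain ⟨v, -, hD⟩ := exists_mD_eq_iteratedFDeriv α
  ext x
  rw [Pi.smul_apply, hD f hf, hD (c • f) (hf.const_smul c),
    iteratedFDeriv_const_smul_apply hf.contDiffAt, smul_apply]

theorem mD_eq_of_eventuallyEq {x : Euc n} (hf : ContDiff ℝ (deg α) f) (hg : ContDiff ℝ (deg α) g)
    (h : f =ᶠ[𝓝 x] g) : mD α f x = mD α g x := by
  obtain ⟨v, -, hD⟩ := exists_mD_eq_iteratedFDeriv α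
  rw [hD f hf, hD g hg, (h.iteratedFDeriv ℝ (deg α)).eq_of_nhds]

end MultiIndex

section CmLipNorm

variable {m n : ℕ} {f g : Euc n → ℝ} {M N : ℝ}

namespace CmLipNormLe

theorem contDiff (hf : CmLipNormLe m n f M) {j : ℕ} (hj : j ≤ m - 1) : ContDiff ℝ j f :=
  hf.1.of_le (mod_cast hj)

theorem mono (hf : CmLipNormLe m n f M) (h : M ≤ N) : CmLipNormLe m n f N :=
  ⟨hf.1, fun α hα x => (hf.2.1 α hα x).trans h, fun α hα i x t =>
    (hf.2.2 α hα i x t).trans (mul_le_mul_of_nonneg_right h (abs_nonneg t))⟩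

theorem add (hf : CmLipNormLe m n f M) (hg : CmLipNormLe m n g N) :
    CmLipNormLe m n (f + g) (M + N) := by
  refine ⟨hf.1.add hg.1, fun α hα x => ?_, fun α hα i x t => ?_⟩
  · rw [mD_add (hf.contDiff hα) (hg.contDiff hα)]
    exact (abs_add_le _ _).trans (add_le_add (hf.2.1 α hα x) (hg.2.1 α hα x))
  · rw [mD_add (hf.contDiff hα.le) (hg.contDiff hα.le), Pi.add_apply, Pi.add_apply,
      add_sub_add_comm, add_mul]
    exact (abs_add_le _ _).trans (add_le_add (hf.2.2 α hα i x t) (hg.2.2 α hα i x t))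

theorem const_smul (c : ℝ) (hf : CmLipNormLe m n f M) :
    CmLipNormLe m n (c • f) (|c| * M) := by
  refine ⟨hf.1.const_smul c, fun α hα x => ?_, fun α hα i x t => ?_⟩
  · rw [mD_const_smul c (hf.contDiff hα), Pi.smul_apply, smul_eq_mul, abs_mul]
    exact mul_le_mul_of_nonneg_left (hf.2.1 α hα x) (abs_nonneg c)
  · rw [mD_const_smul c (hf.contDiff hα.le), Pi.smul_apply, Pi.smul_apply, ← smul_sub,
      smul_eq_mul, abs_mul, mul_assoc]
    exact mul_le_mul_of_nonneg_left (hf.2.2 α hα i x t) (abs_nonneg c)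

theorem zero : CmLipNormLe m n 0 0 := by
  have h_mD (α : Fin n → ℕ) : mD α (0 : Euc n → ℝ) = 0 := by
    simpa using mD_const_smul (α := α) (f := 0) 0 contDiff_const
  exact ⟨contDiff_const, by simp [h_mD], by simp [h_mD]⟩

theorem sum {ι : Type*} (s : Finset ι) {f : ι → Euc n → ℝ} {M : ι → ℝ}
    (hf : ∀ i, CmLipNormLe m n (f i) (M i)) : CmLipNormLe m n (∑ i ∈ s, f i) (∑ i ∈ s, M i) := by
  classical
  induction s using Finset.induction_on with
  | empty => exact zero
  | insert i s hi ih =>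
    rw [Finset.sum_insert hi, Finset.sum_insert hi]
    exact (hf i).add ih

theorem nonneg (hf : CmLipNormLe m n f M) : 0 ≤ M :=
  (abs_nonneg _).trans (hf.2.1 0 (by simp [deg]) 0)

end CmLipNormLe

theorem cmLipNormLe_of_iteratedFDeriv (hf : ContDiff ℝ (m - 1 : ℕ) f)
    (hbound : ∀ j ≤ m - 1, ∀ x, ‖iteratedFDeriv ℝ j f x‖ ≤ M) {K : ℝ≥0} (hKM : K ≤ M)
    (hlip : LipschitzWith K (iteratedFDeriv ℝ (m - 1) f)) : CmLipNormLe m n f M := by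
  refine ⟨mod_cast hf, fun α hα x => ?_, fun α hα i x t => ?_⟩
  · exact (abs_mD_le (hf.of_le (mod_cast hα)) x).trans (hbound _ hα x)
  · rw [← hα] at hf hlip
    refine (abs_mD_sub_mD_le hf _ x).trans ((hlip.dist_le_mul _ x).trans ?_)
    rw [dist_self_add_left, norm_smul, PiLp.norm_single, norm_one, mul_one,
      Real.norm_eq_abs]
    exact mul_le_mul_of_nonneg_right hKM (abs_nonneg t)

theorem exists_cmLipNormLe_of_hasCompactSupport (hf : ∀ x, ContDiffLipschitzAt (m - 1) f x)
    (hc : HasCompactSupport f) : ∃ M, CmLipNormLe m n f M := by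
  have h_contDiff : ContDiff ℝ (m - 1 : ℕ) f := contDiff_iff_contDiffAt.2 fun x => (hf x).1
  have h_bound : ∀ j ≤ m - 1, ∃ B, ∀ x, ‖iteratedFDeriv ℝ j f x‖ ≤ B := fun j hj =>
    (hc.iteratedFDeriv j).exists_bound_of_continuous
      (h_contDiff.continuous_iteratedFDeriv (mod_cast hj))
  choose! B hB using h_bound
  obtain ⟨K, hK⟩ := exists_lipschitzWith_of_locallyLipschitz_of_hasCompactSupport
    (fun x => (hf x).2) (hc.iteratedFDeriv (𝕜 := ℝ) (m - 1))
  obtain ⟨A, hA⟩ := ((Set.finite_Iic (m - 1)).image B).bddAbove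
  exact ⟨max A K, cmLipNormLe_of_iteratedFDeriv h_contDiff
    (fun j hj x => (hB j hj x).trans ((hA ⟨j, hj, rfl⟩).trans (le_max_left _ _)))
    (le_max_right _ _) hK⟩

end CmLipNorm

section Polynomial

variable {n : ℕ}

theorem contDiff_peval (P : MPoly n) : ContDiff ℝ ∞ (peval P) :=
  contDiff_iff_contDiffAt.2 fun x => (AnalyticAt.aeval_mvPolynomial
    (fun i => (EuclideanSpace.proj i : Euc n →L[ℝ] ℝ).analyticAt x) P).contDiffAt

theorem hasFDerivAt_peval (P : MPoly n) (x : Euc n) : HasFDerivAt (peval P)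
    (∑ i, peval (MvPolynomial.pderiv i P) x • EuclideanSpace.proj (𝕜 := ℝ) i) x := by
  induction P using MvPolynomial.induction_on with
  | C a =>
    have h_eq : peval (MvPolynomial.C a) = fun _ : Euc n => a := by ext; simp [peval]
    simpa [h_eq, peval] using hasFDerivAt_const a x
  | add p q hp hq =>
    have h_eq : peval (p + q) = peval p + peval q := by ext; simp [peval]
    rw [h_eq]
    exact (hp.add hq).congr_fderiv (by simp [peval, add_smul, Finset.sum_add_distrib])
  | mul_X p i hp =>
    have h_eq : peval (p * MvPolynomial.X i) =
        peval p * ⇑(EuclideanSpace.proj i : Euc n →L[ℝ] ℝ) := by ext; simp [peval]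
    rw [h_eq]
    refine (hp.mul (ContinuousLinearMap.hasFDerivAt _)).congr_fderiv ?_
    simp [peval, MvPolynomial.pderiv_X, Pi.single_apply, add_smul, Finset.sum_add_distrib,
      Finset.smul_sum, mul_smul, apply_ite]

theorem pD_peval (i : Fin n) (P : MPoly n) : pD i (peval P) = peval (MvPolynomial.pderiv i P) := by
  ext x
  simp [pD, (hasFDerivAt_peval P x).fderiv]

theorem foldr_pD_peval (l : List (Fin n)) (P : MPoly n) :
    l.foldr pD (peval P) = peval (l.foldr (fun i Q => MvPolynomial.pderiv i Q) P) := by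
  induction l with
  | nil => rfl
  | cons i l ih => rw [List.foldr_cons, ih, pD_peval, List.foldr_cons]

theorem abs_coeff_le_abs_coeff_foldr_pderiv (P : MPoly n) (l : List (Fin n)) (s : Fin n →₀ ℕ) :
    |P.coeff (s + (l.map fun i => Finsupp.single i 1).sum)| ≤
      |(l.foldr (fun i Q => MvPolynomial.pderiv i Q) P).coeff s| := by
  induction l generalizing s with
  | nil => simp
  | cons i l ih =>
    rw [List.map_cons, List.sum_cons, ← add_assoc, List.foldr_cons, MvPolynomial.coeff_pderiv,
      abs_mul]
    refine (ih _).trans (le_mul_of_one_le_right (abs_nonneg _) ?_)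
    exact (le_add_of_nonneg_left (Nat.cast_nonneg _)).trans (le_abs_self _)

theorem abs_coeff_le_abs_mD_peval (P : MPoly n) (s : Fin n →₀ ℕ) :
    |P.coeff s| ≤ |mD s (peval P) 0| := by
  have h_eval (Q : MPoly n) : peval Q 0 = Q.coeff 0 := by
    simp [peval, MvPolynomial.eval_zero', MvPolynomial.constantCoeff_eq]
  calc |P.coeff s| = |P.coeff (0 + ((directions s).map fun i => Finsupp.single i 1).sum)| := by
        rw [sum_map_single_directions, zero_add]
    _ ≤ |((directions s).foldr (fun i Q => MvPolynomial.pderiv i Q) P).coeff 0| :=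
        abs_coeff_le_abs_coeff_foldr_pderiv P _ 0
    _ = |mD s (peval P) 0| := by rw [← h_eval, ← foldr_pD_peval]; rfl

theorem peval_eq_sum (P : MPoly n) :
    peval P = ∑ s ∈ P.support, P.coeff s • peval (MvPolynomial.monomial s 1) := by
  ext x
  simp [peval, MvPolynomial.eval_eq]

theorem exists_forall_cmLipNormLe_smul_peval (m d : ℕ) {θ : Euc n → ℝ} (hθ : ContDiff ℝ ∞ θ)
    (hc : HasCompactSupport θ) : ∃ M, ∀ P : MPoly n, P.totalDegree ≤ d →
      (∀ s : Fin n →₀ ℕ, s.degree ≤ d → |P.coeff s| ≤ 1) →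
        CmLipNormLe m n (θ • peval P) M := by
  have h_monomial (s : Fin n →₀ ℕ) :
      ∃ M, CmLipNormLe m n (θ • peval (MvPolynomial.monomial s 1)) M :=
    exists_cmLipNormLe_of_hasCompactSupport
      (fun _ => contDiffLipschitzAt_of_contDiffAt_infty
        (hθ.smul (contDiff_peval _)).contDiffAt) hc.smul_right
  choose M hM using h_monomial
  refine ⟨∑ s ∈ (Finsupp.finite_of_degree_le d).toFinset, M s, fun P hP h_coeff => ?_⟩
  have h_degree : ∀ s ∈ P.support, s.degree ≤ d := fun s hs =>
    (MvPolynomial.le_totalDegree hs).trans hP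
  have h_sum : θ • peval P =
      ∑ s ∈ P.support, P.coeff s • θ • peval (MvPolynomial.monomial s 1) := by
    rw [peval_eq_sum, Finset.smul_sum]
    simp only [smul_comm θ]
  rw [h_sum]
  refine (CmLipNormLe.sum P.support fun s => (hM s).const_smul (P.coeff s)).mono ?_
  calc ∑ s ∈ P.support, |P.coeff s| * M s ≤ ∑ s ∈ P.support, M s :=
        Finset.sum_le_sum fun s hs =>
          mul_le_of_le_one_left (hM s).nonneg (h_coeff s (h_degree s hs))
    _ ≤ _ := Finset.sum_le_sum_of_subset_of_nonneg (fun s hs => by simpa using h_degree s hs)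
        fun s _ _ => (hM s).nonneg

end Polynomial

theorem isJetAt_zero_of_eventuallyEq {m n : ℕ} {F R : Euc n → ℝ} {P : MPoly n}
    (hF : ContDiff ℝ (m - 1 : ℕ) F) (hP : P.totalDegree ≤ m - 1)
    (hR : IsSmoothHomogeneous m R) (h : F =ᶠ[𝓝 0] peval P + R) (hm : 0 < m) :
    IsJetAt m n F 0 P := by
  refine ⟨hP, fun α hα => ?_⟩
  have h_lt : deg α < m := by omega
  have hR_contDiff : ContDiff ℝ (deg α) R := hR.contDiff h_lt
  have hP_contDiff : ContDiff ℝ (deg α) (peval P) := (contDiff_peval P).of_le (mod_cast le_top)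
  have hR_zero : mD α R 0 = 0 := by
    have h := abs_mD_le hR_contDiff 0
    rwa [hR.iteratedFDeriv_zero h_lt, norm_zero, abs_nonpos_iff] at h
  rw [mD_eq_of_eventuallyEq (g := peval P + R) (hF.of_le (mod_cast hα))
      (hP_contDiff.add hR_contDiff) h,
    mD_add hP_contDiff hR_contDiff, Pi.add_apply, hR_zero, add_zero]

/-- Second inclusion in (4.2): `Γ̃₀' ⊆ Γ'*(0,C)`. -/
theorem GammaTilde0'_subset_GammaStar' (m n : ℕ) (hm : 0 < m) (hn : 0 < n) :
    ∃ C : ℝ, 0 < C ∧ GammaTilde0' m n ⊆ GammaStar' m n 0 C := by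
  let θ : ContDiffBump (0 : Euc n) := default
  let R : Euc n → ℝ := fun x => ‖x‖ ^ m
  have hR : IsSmoothHomogeneous m R := isSmoothHomogeneous_norm_pow m
  obtain ⟨A, hA⟩ := exists_forall_cmLipNormLe_smul_peval m (m - 1) θ.contDiff θ.hasCompactSupport
  obtain ⟨B, hB⟩ : ∃ B, CmLipNormLe m n (⇑θ • R) B :=
    exists_cmLipNormLe_of_hasCompactSupport
      (IsSmoothHomogeneous.contDiffLipschitzAt_smul (by rwa [Nat.sub_add_cancel hm])
        θ.contDiff θ.eventuallyEq_one)
      θ.hasCompactSupport.smul_right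
  refine ⟨max (A + B) 1, by positivity, fun P ⟨h_deg, h_jet, h_nonneg⟩ => ?_⟩
  have h_coeff (s : Fin n →₀ ℕ) (hs : s.degree ≤ m - 1) : |P.coeff s| ≤ 1 :=
    (abs_coeff_le_abs_mD_peval P s).trans (h_jet s (by rwa [deg, ← Finsupp.degree_eq_sum]))
  have h_norm : CmLipNormLe m n (⇑θ • peval P + ⇑θ • R) (A + B) := (hA P h_deg h_coeff).add hB
  refine ⟨_, h_norm.mono (le_max_left _ _), fun y => ?_, ?_⟩
  · calc 0 ≤ θ y * (peval P y + ‖y‖ ^ m) := mul_nonneg θ.nonneg (h_nonneg y)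
      _ = _ := mul_add _ _ _
  · refine isJetAt_zero_of_eventuallyEq h_norm.1 h_deg hR ?_ hm
    filter_upwards [θ.eventuallyEq_one] with y hy
    simp [hy]

end
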